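/- arXiv:1705.01316 — 2 statements merged into one kernel-verified Lean document; each statement's English description precedes it below -/
import Mathlib

section
/- Let α > 0. For every pair of square-summable sequences a = (a_n)_{n≥1} and b = (b_n)_{n≥1} of nonnegative reals, the double series ∑_{m=1}^∞ ∑_{n=1}^∞ a_m b_n (mn)^{α−1/2} / max(m,n)^{2α} converges and is at most max(2/α, ζ(1+α)) · ‖a‖_{ℓ²} ‖b‖_{ℓ²}. -/
/-!
The bound is the Schur test with weights `n ^ (-1/2)`, which asks for
`∑ n, min m n ^ (2α) * n ^ (-(1+α)) ≤ C * m ^ α` with `C = max (2/α) (ζ(1+α))`. By induction on `m`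
this reduces to the tail bound `∑ n > m, n ^ (-(1+α)) ≤ C / ((m+1) ^ α + m ^ α)`, because
`(m+1) ^ (2α) - m ^ (2α)` factors as a difference of squares. For `m = 0` the tail bound says
`ζ(1+α) ≤ C`; for `m ≥ 1` it telescopes, and with `h = 1/n` each term amounts to
`h ≤ C * (1 / (1 + (1-h) ^ α) - 1 / (1 + (1+h) ^ α))` for `0 < h ≤ 1/2`. The bracket is increasing
and concave in `α ≥ 0`, being a sum of sigmoids, so it is controlled by its values at
`α = 0, 1, 2, 3`.
-/

section SchurTest

variable {ι κ : Type*} {K : ι → κ → ℝ} {u : ι → ℝ} {v : κ → ℝ} {A B : ℝ} {a : ι → ℝ} {b : κ → ℝ}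

lemma sum_sq_mul_kernel_le (hK : ∀ i j, 0 ≤ K i j) (hu : ∀ i, 0 < u i) (hv : ∀ j, 0 < v j)
    (hrow : ∀ i (t : Finset κ), ∑ j ∈ t, K i j * v j ≤ A * u i)
    (ha : Summable fun i => a i ^ 2) (T : Finset (ι × κ)) :
    ∑ p ∈ T, a p.1 ^ 2 * (K p.1 p.2 * v p.2 / u p.1) ≤ A * ∑' i, a i ^ 2 := by
  classical
  have hA (i : ι) : 0 ≤ A * a i ^ 2 := by
    have : 0 ≤ A := nonneg_of_mul_nonneg_left (by simpa using hrow i ∅) (hu i)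
    positivity
  have hterm (p : ι × κ) : 0 ≤ a p.1 ^ 2 * (K p.1 p.2 * v p.2 / u p.1) :=
    mul_nonneg (sq_nonneg _) (div_nonneg (mul_nonneg (hK _ _) (hv _).le) (hu _).le)
  calc ∑ p ∈ T, a p.1 ^ 2 * (K p.1 p.2 * v p.2 / u p.1)
      ≤ ∑ p ∈ T.image Prod.fst ×ˢ T.image Prod.snd, a p.1 ^ 2 * (K p.1 p.2 * v p.2 / u p.1) :=
        Finset.sum_le_sum_of_subset_of_nonneg Finset.subset_product fun p _ _ => hterm p
    _ = ∑ i ∈ T.image Prod.fst, a i ^ 2 * ((∑ j ∈ T.image Prod.snd, K i j * v j) / u i) := by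
        simp only [Finset.sum_product, Finset.mul_sum, Finset.sum_div]
    _ ≤ ∑ i ∈ T.image Prod.fst, A * a i ^ 2 := Finset.sum_le_sum fun i _ => by
        rw [mul_comm A]
        gcongr
        exact (div_le_iff₀ (hu i)).2 (hrow i _)
    _ ≤ ∑' i, A * a i ^ 2 := (ha.mul_left A).sum_le_tsum _ fun i _ => hA i
    _ = A * ∑' i, a i ^ 2 := tsum_mul_left

lemma sum_abs_mul_kernel_le_of_schur (hK : ∀ i j, 0 ≤ K i j) (hu : ∀ i, 0 < u i)
    (hv : ∀ j, 0 < v j) (hrow : ∀ i (t : Finset κ), ∑ j ∈ t, K i j * v j ≤ A * u i)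
    (hcol : ∀ j (s : Finset ι), ∑ i ∈ s, K i j * u i ≤ B * v j)
    (ha : Summable fun i => a i ^ 2) (hb : Summable fun j => b j ^ 2) (T : Finset (ι × κ)) :
    ∑ p ∈ T, |a p.1 * b p.2 * K p.1 p.2| ≤
      √A * √B * √(∑' i, a i ^ 2) * √(∑' j, b j ^ 2) := by
  set P : ι × κ → ℝ := fun p => a p.1 ^ 2 * (K p.1 p.2 * v p.2 / u p.1)
  set Q : ι × κ → ℝ := fun p => b p.2 ^ 2 * (K p.1 p.2 * u p.1 / v p.2)
  have hP (p : ι × κ) : 0 ≤ P p :=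
    mul_nonneg (sq_nonneg _) (div_nonneg (mul_nonneg (hK _ _) (hv _).le) (hu _).le)
  have hQ (p : ι × κ) : 0 ≤ Q p :=
    mul_nonneg (sq_nonneg _) (div_nonneg (mul_nonneg (hK _ _) (hu _).le) (hv _).le)
  have hPQ (p : ι × κ) : |a p.1 * b p.2 * K p.1 p.2| ^ 2 = P p * Q p := by
    have := (hu p.1).ne'
    have := (hv p.2).ne'
    simp only [P, Q, sq_abs]
    field_simp
  have hPsum : ∑ p ∈ T, P p ≤ A * ∑' i, a i ^ 2 := sum_sq_mul_kernel_le hK hu hv hrow ha T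
  have hQsum : ∑ p ∈ T, Q p ≤ B * ∑' j, b j ^ 2 := by
    have := sum_sq_mul_kernel_le (fun j i => hK i j) hv hu hcol hb
      (T.map (Equiv.prodComm ι κ).toEmbedding)
    rwa [Finset.sum_map] at this
  calc ∑ p ∈ T, |a p.1 * b p.2 * K p.1 p.2|
      ≤ √((∑ p ∈ T, P p) * ∑ p ∈ T, Q p) :=
        Real.le_sqrt_of_sq_le <| Finset.sum_sq_le_sum_mul_sum_of_sq_le_mul T
          (fun p _ => hP p) (fun p _ => hQ p) fun p _ => (hPQ p).le
    _ = √(∑ p ∈ T, P p) * √(∑ p ∈ T, Q p) := Real.sqrt_mul (Finset.sum_nonneg fun p _ => hP p) _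
    _ ≤ √(A * ∑' i, a i ^ 2) * √(B * ∑' j, b j ^ 2) := by gcongr
    _ = √A * √B * √(∑' i, a i ^ 2) * √(∑' j, b j ^ 2) := by
        rw [Real.sqrt_mul' _ (tsum_nonneg fun i => sq_nonneg (a i)),
          Real.sqrt_mul' _ (tsum_nonneg fun j => sq_nonneg (b j))]
        ring

theorem summable_and_abs_tsum_le_of_schur (hK : ∀ i j, 0 ≤ K i j) (hu : ∀ i, 0 < u i)
    (hv : ∀ j, 0 < v j) (hrow : ∀ i (t : Finset κ), ∑ j ∈ t, K i j * v j ≤ A * u i)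
    (hcol : ∀ j (s : Finset ι), ∑ i ∈ s, K i j * u i ≤ B * v j)
    (ha : Summable fun i => a i ^ 2) (hb : Summable fun j => b j ^ 2) :
    Summable (fun p : ι × κ => a p.1 * b p.2 * K p.1 p.2) ∧
      |∑' p : ι × κ, a p.1 * b p.2 * K p.1 p.2| ≤
        √A * √B * √(∑' i, a i ^ 2) * √(∑' j, b j ^ 2) := by
  have hfin := sum_abs_mul_kernel_le_of_schur hK hu hv hrow hcol ha hb
  have hnorm : Summable fun p : ι × κ => ‖a p.1 * b p.2 * K p.1 p.2‖ :=
    summable_of_sum_le (fun _ => norm_nonneg _) hfin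
  exact ⟨hnorm.of_norm, (norm_tsum_le_tsum_norm hnorm).trans (hnorm.tsum_le_of_sum_le hfin)⟩

end SchurTest

section FiniteSums

lemma sum_le_of_forall_le_sub {M : Type*} [AddCommGroup M] [PartialOrder M] [IsOrderedAddMonoid M]
    {f q : ℕ → M} {m : ℕ} (hf : ∀ n, m < n → 0 ≤ f n) (hq : ∀ n, m ≤ n → 0 ≤ q n)
    (hfq : ∀ n, m ≤ n → f (n + 1) ≤ q n - q (n + 1)) {s : Finset ℕ} (hs : ∀ n ∈ s, m < n) :
    ∑ n ∈ s, f n ≤ q m := by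
  have htele (N : ℕ) (hN : m ≤ N) : ∑ n ∈ Finset.Ioc m N, f n ≤ q m - q N := by
    induction N, hN using Nat.le_induction with
    | base => simp
    | succ N hN ih =>
      rw [Finset.sum_Ioc_succ_top hN, ← sub_add_sub_cancel (q m) (q N)]
      exact add_le_add ih (hfq N hN)
  have hsub : s ⊆ Finset.Ioc m (max m (s.sup id)) := fun n hn =>
    Finset.mem_Ioc.2 ⟨hs n hn, le_max_of_le_right (Finset.le_sup (f := id) hn)⟩
  calc ∑ n ∈ s, f n ≤ ∑ n ∈ Finset.Ioc m (max m (s.sup id)), f n :=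
        Finset.sum_le_sum_of_subset_of_nonneg hsub fun n hn _ =>
          hf n (Finset.mem_Ioc.1 hn).1
    _ ≤ q m - q (max m (s.sup id)) := htele _ (le_max_left _ _)
    _ ≤ q m := sub_le_self _ (hq _ (le_max_left _ _))

lemma sum_comp_min_succ_mul {R : Type*} [Ring R] (G w : ℕ → R) (m : ℕ) (s : Finset ℕ) :
    ∑ n ∈ s, G (min (m + 1) n) * w n =
      ∑ n ∈ s, G (min m n) * w n + (G (m + 1) - G m) * ∑ n ∈ s with m < n, w n := by
  rw [Finset.sum_filter, Finset.mul_sum, ← Finset.sum_add_distrib]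
  refine Finset.sum_congr rfl fun n _ => ?_
  split_ifs with hmn
  · rw [min_eq_left hmn, min_eq_left hmn.le, ← add_mul, add_sub_cancel]
  · rw [min_eq_right (by lia), min_eq_right (by lia), mul_zero, add_zero]

end FiniteSums

section ReciprocalGap

lemma concaveOn_sigmoid_Ici : ConcaveOn ℝ (Set.Ici 0) Real.sigmoid := by
  refine AntitoneOn.concaveOn_of_deriv (convex_Ici 0) continuous_sigmoid.continuousOn
    differentiable_sigmoid.differentiableOn ?_
  rw [Real.deriv_sigmoid, interior_Ici]
  intro x hx y _ hxy
  have hhalf : 2⁻¹ ≤ Real.sigmoid x := Real.sigmoid_zero ▸ Real.sigmoid_le (Set.mem_Ioi.1 hx).le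
  have hmono : Real.sigmoid x ≤ Real.sigmoid y := Real.sigmoid_le hxy
  change Real.sigmoid y * (1 - Real.sigmoid y) ≤ Real.sigmoid x * (1 - Real.sigmoid x)
  nlinarith

lemma concaveOn_sigmoid_mul {L : ℝ} (hL : 0 ≤ L) :
    ConcaveOn ℝ (Set.Ici 0) fun α => Real.sigmoid (α * L) :=
  (concaveOn_sigmoid_Ici.comp_linearMap (LinearMap.mulRight ℝ L)).subset
    (fun _ hα => mul_nonneg hα hL) (convex_Ici 0)

lemma monotone_sigmoid_mul {L : ℝ} (hL : 0 ≤ L) : Monotone fun α => Real.sigmoid (α * L) :=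
  fun _ _ hαβ => Real.sigmoid_le (mul_le_mul_of_nonneg_right hαβ hL)

lemma one_div_one_add_rpow_eq_sigmoid {x : ℝ} (hx : 0 < x) (α : ℝ) :
    1 / (1 + x ^ α) = Real.sigmoid (α * -Real.log x) := by
  rw [Real.sigmoid_def, Real.rpow_def_of_pos hx, one_div, mul_neg, neg_neg, mul_comm α]

/-- The decrease of `t ↦ 1 / (1 + t ^ α)` from `t = 1 - h` to `t = 1 + h`. For `h = 1 / x` it is
`x ^ α` times the decrease of `y ↦ 1 / ((y + 1) ^ α + y ^ α)` from `y = x - 1` to `y = x`. -/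
noncomputable def reciprocalGap (h α : ℝ) : ℝ := 1 / (1 + (1 - h) ^ α) - 1 / (1 + (1 + h) ^ α)

variable {h α : ℝ}

lemma reciprocalGap_eq_sigmoid (h0 : 0 ≤ h) (h1 : h < 1) :
    reciprocalGap h = fun α =>
      Real.sigmoid (α * -Real.log (1 - h)) + Real.sigmoid (α * Real.log (1 + h)) - 1 := by
  funext α
  rw [reciprocalGap, one_div_one_add_rpow_eq_sigmoid (by linarith),
    one_div_one_add_rpow_eq_sigmoid (by linarith), mul_neg α (Real.log (1 + h)), Real.sigmoid_neg]
  ring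

lemma neg_log_one_sub_nonneg (h0 : 0 ≤ h) (h1 : h < 1) : 0 ≤ -Real.log (1 - h) :=
  neg_nonneg.2 (Real.log_nonpos (by linarith) (by linarith))

lemma monotone_reciprocalGap (h0 : 0 ≤ h) (h1 : h < 1) : Monotone (reciprocalGap h) := by
  rw [reciprocalGap_eq_sigmoid h0 h1]
  exact ((monotone_sigmoid_mul (neg_log_one_sub_nonneg h0 h1)).add
    (monotone_sigmoid_mul (Real.log_nonneg (by linarith)))).add_const (-1)

lemma concaveOn_reciprocalGap (h0 : 0 ≤ h) (h1 : h < 1) :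
    ConcaveOn ℝ (Set.Ici 0) (reciprocalGap h) := by
  rw [reciprocalGap_eq_sigmoid h0 h1]
  exact ((concaveOn_sigmoid_mul (neg_log_one_sub_nonneg h0 h1)).add
    (concaveOn_sigmoid_mul (Real.log_nonneg (by linarith)))).add_const (-1)

lemma le_reciprocalGap_one (h0 : 0 ≤ h) (h2 : h < 2) :
    h / 2 * (1 + h ^ 2 / 4) ≤ reciprocalGap h 1 := by
  have hden : 0 < 4 - h ^ 2 := by nlinarith
  have hval : reciprocalGap h 1 = 2 * h / (4 - h ^ 2) := by
    have : 1 + (1 - h) ≠ 0 := by linarith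
    have : 1 + (1 + h) ≠ 0 := by linarith
    simp only [reciprocalGap, Real.rpow_one]
    field_simp
    ring
  rw [hval, le_div_iff₀ hden]
  nlinarith [pow_nonneg h0 5]

lemma le_reciprocalGap_two (h0 : 0 ≤ h) : h * (1 - h ^ 4 / 4) ≤ reciprocalGap h 2 := by
  have hval : reciprocalGap h 2 = 4 * h / (4 + h ^ 4) := by
    have : 1 + (1 - h) ^ 2 ≠ 0 := by positivity
    have : 1 + (1 + h) ^ 2 ≠ 0 := by positivity
    simp only [reciprocalGap, Real.rpow_two]
    field_simp
    ring
  rw [hval, le_div_iff₀ (by positivity)]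
  nlinarith [pow_nonneg h0 9]

lemma le_reciprocalGap_three (h0 : 0 ≤ h) (h1 : h ≤ 1 / 2) : h ≤ reciprocalGap h 3 := by
  have hsub : 0 < 1 - h := by linarith
  have hsq : h ^ 2 ≤ 1 / 4 := by nlinarith
  have hfactor : 0 ≤ h * (2 - h ^ 2 - 3 * h ^ 4 + h ^ 6) :=
    mul_nonneg h0 (by nlinarith [sq_nonneg h, pow_nonneg h0 6])
  have hcube (x : ℝ) : x ^ (3 : ℝ) = x ^ 3 := by exact_mod_cast Real.rpow_natCast x 3
  rw [reciprocalGap, hcube, hcube, div_sub_div _ _ (by positivity) (by positivity),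
    le_div_iff₀ (by positivity)]
  linarith

-- `5/3` is the largest `α` at which the bounds for `1` and `2` interpolate to `α / 2 * h` for all
-- `h ≤ 1/2`.
lemma le_reciprocalGap_five_thirds (h0 : 0 ≤ h) (h1 : h ≤ 1 / 2) :
    5 / 6 * h ≤ reciprocalGap h (5 / 3) := by
  have hinterp : 1 / 3 * reciprocalGap h 1 + 2 / 3 * reciprocalGap h 2 ≤
      reciprocalGap h (5 / 3) := by
    have := (concaveOn_reciprocalGap h0 (by linarith)).2 (Set.mem_Ici.2 zero_le_one)
      (Set.mem_Ici.2 zero_le_two) (by norm_num : (0 : ℝ) ≤ 1 / 3) (by norm_num : (0 : ℝ) ≤ 2 / 3)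
      (by norm_num)
    simp only [smul_eq_mul] at this
    rwa [show (1 / 3 * 1 + 2 / 3 * 2 : ℝ) = 5 / 3 by norm_num] at this
  have hsurplus : 0 ≤ h ^ 3 * (1 / 4 - h ^ 2) := mul_nonneg (by positivity) (by nlinarith)
  linarith [le_reciprocalGap_one h0 (by linarith), le_reciprocalGap_two h0]

lemma half_mul_le_reciprocalGap (h0 : 0 ≤ h) (h1 : h ≤ 1 / 2) (hα : 0 ≤ α) (hα' : α ≤ 5 / 3) :
    α / 2 * h ≤ reciprocalGap h α := by
  have hzero : reciprocalGap h 0 = 0 := by simp [reciprocalGap]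
  have hchord : 3 / 5 * α * reciprocalGap h (5 / 3) ≤ reciprocalGap h α := by
    have := (concaveOn_reciprocalGap h0 (by linarith)).2 (Set.mem_Ici.2 le_rfl)
      (Set.mem_Ici.2 (by norm_num : (0 : ℝ) ≤ 5 / 3)) (by linarith : 0 ≤ 1 - 3 / 5 * α)
      (by positivity : 0 ≤ 3 / 5 * α) (by ring)
    simp only [hzero, smul_eq_mul, mul_zero, zero_add] at this
    rwa [show 3 / 5 * α * (5 / 3) = α by ring] at this
  calc α / 2 * h = 3 / 5 * α * (5 / 6 * h) := by ring
    _ ≤ 3 / 5 * α * reciprocalGap h (5 / 3) := by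
        gcongr
        exact le_reciprocalGap_five_thirds h0 h1
    _ ≤ reciprocalGap h α := hchord

lemma rpow_neg_mul_reciprocalGap_inv {x : ℝ} (hx : 1 ≤ x) :
    x ^ (-α) * reciprocalGap x⁻¹ α =
      1 / (x ^ α + (x - 1) ^ α) - 1 / ((x + 1) ^ α + x ^ α) := by
  have hx0 : 0 < x := by linarith
  have hsub : (x - 1) ^ α = x ^ α * (1 - x⁻¹) ^ α := by
    rw [← Real.mul_rpow hx0.le (sub_nonneg.2 (inv_le_one_of_one_le₀ hx)), mul_sub,
      mul_inv_cancel₀ hx0.ne', mul_one]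
  have hadd : (x + 1) ^ α = x ^ α * (1 + x⁻¹) ^ α := by
    rw [← Real.mul_rpow hx0.le (by positivity), mul_add, mul_inv_cancel₀ hx0.ne', mul_one]
  rw [hsub, hadd, Real.rpow_neg hx0.le, reciprocalGap]
  simp only [one_div, mul_sub, ← mul_inv]
  ring_nf

end ReciprocalGap

section RowSums

/-- The constant `max (2 / α) (ζ(1 + α))`, with `ζ(1 + α)` written as its Dirichlet series over
`ℕ+`. -/
noncomputable def hilbertConst (α : ℝ) : ℝ := max (2 / α) (∑' n : ℕ+, (n : ℝ) ^ (-(1 + α)))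

variable {α : ℝ}

lemma sum_rpow_le_hilbertConst (hα : 0 < α) (s : Finset ℕ) :
    ∑ n ∈ s, (n : ℝ) ^ (-(1 + α)) ≤ hilbertConst α := by
  have hsum : Summable fun n : ℕ => (n : ℝ) ^ (-(1 + α)) :=
    Real.summable_nat_rpow.2 (by linarith)
  have hzero : ((0 : ℕ) : ℝ) ^ (-(1 + α)) = 0 := by
    rw [Nat.cast_zero, Real.zero_rpow (by linarith)]
  calc ∑ n ∈ s, (n : ℝ) ^ (-(1 + α)) ≤ ∑' n : ℕ, (n : ℝ) ^ (-(1 + α)) :=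
        hsum.sum_le_tsum s fun n _ => by positivity
    _ = ∑' n : ℕ+, (n : ℝ) ^ (-(1 + α)) := by
        rw [tsum_pnat_eq_tsum_succ (f := fun n : ℕ => (n : ℝ) ^ (-(1 + α))),
          hsum.tsum_eq_zero_add, hzero, zero_add]
    _ ≤ hilbertConst α := le_max_right _ _

lemma sum_one_div_pow_le_hilbertConst (hα : 0 < α) {k : ℕ} (hk : α ≤ k) (N : ℕ) :
    ∑ n ∈ Finset.Icc 1 N, 1 / (n : ℝ) ^ (k + 1) ≤ hilbertConst α := by
  refine (Finset.sum_le_sum fun n hn => ?_).trans (sum_rpow_le_hilbertConst hα (Finset.Icc 1 N))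
  have hn1 : (1 : ℝ) ≤ n := by exact_mod_cast (Finset.mem_Icc.1 hn).1
  rw [one_div, ← Real.rpow_natCast, ← Real.rpow_neg (by linarith)]
  refine Real.rpow_le_rpow_of_exponent_le hn1 ?_
  push_cast
  linarith

lemma one_le_hilbertConst (hα : 0 < α) : 1 ≤ hilbertConst α := by
  simpa using sum_one_div_pow_le_hilbertConst hα (Nat.le_ceil α) 1

lemma six_fifths_le_hilbertConst (hα : 0 < α) (hα2 : α ≤ 2) : 6 / 5 ≤ hilbertConst α :=
  le_trans (by norm_num [Finset.sum_Icc_succ_top])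
    (sum_one_div_pow_le_hilbertConst (k := 2) hα (by exact_mod_cast hα2) 16)

lemma seventeen_sixteenths_le_hilbertConst (hα : 0 < α) (hα3 : α ≤ 3) :
    17 / 16 ≤ hilbertConst α :=
  le_trans (by norm_num [Finset.sum_Icc_succ_top])
    (sum_one_div_pow_le_hilbertConst (k := 3) hα (by exact_mod_cast hα3) 2)

lemma le_hilbertConst_mul_reciprocalGap (hα : 0 < α) {h : ℝ} (h0 : 0 ≤ h) (h1 : h ≤ 1 / 2) :
    h ≤ hilbertConst α * reciprocalGap h α := by
  have hC : 1 ≤ hilbertConst α := one_le_hilbertConst hα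
  have hmono : Monotone (reciprocalGap h) := monotone_reciprocalGap h0 (by linarith)
  suffices ∃ k, 1 ≤ hilbertConst α * k ∧ k * h ≤ reciprocalGap h α by
    obtain ⟨k, hCk, hk⟩ := this
    calc h ≤ hilbertConst α * k * h := le_mul_of_one_le_left h0 hCk
      _ = hilbertConst α * (k * h) := mul_assoc _ _ _
      _ ≤ hilbertConst α * reciprocalGap h α := by gcongr
  rcases le_total α (5 / 3) with hα53 | hα53
  · have h2α : 2 ≤ hilbertConst α * α := (div_le_iff₀ hα).1 (le_max_left _ _)
    exact ⟨α / 2, by linarith, half_mul_le_reciprocalGap h0 h1 hα.le hα53⟩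
  rcases le_total α 2 with hα2 | hα2
  · exact ⟨5 / 6, by linarith [six_fifths_le_hilbertConst hα hα2],
      (le_reciprocalGap_five_thirds h0 h1).trans (hmono hα53)⟩
  rcases le_total α 3 with hα3 | hα3
  · refine ⟨63 / 64, by linarith [seventeen_sixteenths_le_hilbertConst hα hα3], ?_⟩
    have hpow : h ^ 4 ≤ (1 / 2) ^ 4 := by gcongr
    calc 63 / 64 * h ≤ h * (1 - h ^ 4 / 4) := by nlinarith
      _ ≤ reciprocalGap h 2 := le_reciprocalGap_two h0
      _ ≤ reciprocalGap h α := hmono hα2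
  · exact ⟨1, by linarith, by simpa using (le_reciprocalGap_three h0 h1).trans (hmono hα3)⟩

lemma rpow_le_hilbertConst_div_sub_div (hα : 0 < α) {x : ℝ} (hx : 2 ≤ x) :
    x ^ (-(1 + α)) ≤ hilbertConst α / (x ^ α + (x - 1) ^ α) -
      hilbertConst α / ((x + 1) ^ α + x ^ α) := by
  have hx0 : 0 < x := by linarith
  have hinv : x⁻¹ ≤ 1 / 2 := by
    rw [one_div]
    exact inv_anti₀ two_pos hx
  calc x ^ (-(1 + α)) = x ^ (-α) * x⁻¹ := by
        rw [neg_add_rev, Real.rpow_add hx0, Real.rpow_neg_one]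
    _ ≤ x ^ (-α) * (hilbertConst α * reciprocalGap x⁻¹ α) := by
        gcongr
        exact le_hilbertConst_mul_reciprocalGap hα (by positivity) hinv
    _ = hilbertConst α * (x ^ (-α) * reciprocalGap x⁻¹ α) := by ring
    _ = _ := by
        rw [rpow_neg_mul_reciprocalGap_inv (by linarith)]
        ring

lemma sum_rpow_le_hilbertConst_div (hα : 0 < α) (m : ℕ) {s : Finset ℕ} (hs : ∀ n ∈ s, m < n) :
    ∑ n ∈ s, (n : ℝ) ^ (-(1 + α)) ≤ hilbertConst α / ((m + 1 : ℝ) ^ α + (m : ℝ) ^ α) := by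
  rcases Nat.eq_zero_or_pos m with rfl | hm
  · simpa [Real.zero_rpow hα.ne'] using sum_rpow_le_hilbertConst hα s
  have hC : 0 ≤ hilbertConst α := zero_le_one.trans (one_le_hilbertConst hα)
  refine sum_le_of_forall_le_sub
    (q := fun n : ℕ => hilbertConst α / ((n + 1 : ℝ) ^ α + (n : ℝ) ^ α))
    (fun n _ => by positivity) (fun n _ => by positivity) (fun n hn => ?_) hs
  have hn1 : (1 : ℝ) ≤ n := by exact_mod_cast hm.trans_le hn
  have := rpow_le_hilbertConst_div_sub_div hα (by linarith : (2 : ℝ) ≤ n + 1)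
  rw [add_sub_cancel_right] at this
  exact_mod_cast this

lemma sum_min_rpow_mul_rpow_le (hα : 0 < α) (s : Finset ℕ) (m : ℕ) :
    ∑ n ∈ s, (min m n : ℝ) ^ (2 * α) * (n : ℝ) ^ (-(1 + α)) ≤ hilbertConst α * (m : ℝ) ^ α := by
  simp only [← Nat.cast_min]
  induction m with
  | zero => simp [Real.zero_rpow hα.ne', Real.zero_rpow (mul_pos two_pos hα).ne']
  | succ m ih =>
    have hsq (k : ℕ) : (k : ℝ) ^ (2 * α) = ((k : ℝ) ^ α) ^ 2 := by
      rw [mul_comm, Real.rpow_mul k.cast_nonneg, Real.rpow_two]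
    have hmono : (m : ℝ) ^ α ≤ ((m + 1 : ℕ) : ℝ) ^ α := by
      gcongr
      exact m.le_succ
    have hdiff : 0 ≤ ((m + 1 : ℕ) : ℝ) ^ (2 * α) - (m : ℝ) ^ (2 * α) := by
      rw [hsq, hsq, sub_nonneg]
      gcongr
    have htail := sum_rpow_le_hilbertConst_div hα m (s := s.filter (m < ·))
      fun n hn => (Finset.mem_filter.1 hn).2
    rw [sum_comp_min_succ_mul (fun k : ℕ => (k : ℝ) ^ (2 * α)) (fun n : ℕ => (n : ℝ) ^ (-(1 + α)))]
    calc _ ≤ hilbertConst α * (m : ℝ) ^ α + (((m + 1 : ℕ) : ℝ) ^ (2 * α) - (m : ℝ) ^ (2 * α)) *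
          (hilbertConst α / (((m + 1 : ℕ) : ℝ) ^ α + (m : ℝ) ^ α)) := by
          gcongr
          exact_mod_cast htail
      _ = hilbertConst α * ((m + 1 : ℕ) : ℝ) ^ α := by
          rw [hsq, hsq]
          field_simp
          ring

end RowSums

section HilbertKernel

/-- The kernel `(x y) ^ (α - 1/2) / max x y ^ (2 α)` of the form `B_α`, on real arguments. -/
noncomputable def hilbertKernel (α x y : ℝ) : ℝ := (x * y) ^ (α - 1/2) / (max x y) ^ (2*α)

variable {α x y : ℝ}

lemma hilbertKernel_comm (α x y : ℝ) : hilbertKernel α x y = hilbertKernel α y x := by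
  rw [hilbertKernel, hilbertKernel, mul_comm, max_comm]

lemma hilbertKernel_nonneg (hx : 0 ≤ x) (hy : 0 ≤ y) : 0 ≤ hilbertKernel α x y := by
  unfold hilbertKernel
  positivity

lemma hilbertKernel_mul_rpow (hx : 0 < x) (hy : 0 < y) :
    hilbertKernel α x y * y ^ (-1/2 : ℝ) =
      x ^ (-1/2 - α) * ((min x y) ^ (2 * α) * y ^ (-(1 + α))) := by
  have hmax : max x y ^ (2 * α) = (x * y) ^ (2 * α) / min x y ^ (2 * α) := by
    rw [← Real.div_rpow (by positivity) (by positivity), ← max_mul_min x y,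
      mul_div_cancel_right₀ _ (lt_min hx hy).ne']
  rw [hilbertKernel, hmax, div_div_eq_mul_div, mul_div_right_comm, ← Real.rpow_sub (by positivity),
    Real.mul_rpow hx.le hy.le]
  calc _ = x ^ (α - 1/2 - 2 * α) *
        (min x y ^ (2 * α) * (y ^ (α - 1/2 - 2 * α) * y ^ (-1/2 : ℝ))) := by ring
    _ = _ := by
        rw [← Real.rpow_add hy]
        ring_nf

lemma sum_hilbertKernel_mul_rpow_le (hα : 0 < α) (m : ℕ+) (s : Finset ℕ+) :
    ∑ n ∈ s, hilbertKernel α m n * (n : ℝ) ^ (-1/2 : ℝ) ≤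
      hilbertConst α * (m : ℝ) ^ (-1/2 : ℝ) := by
  have hpos (n : ℕ+) : (0 : ℝ) < n := by exact_mod_cast n.pos
  have hrow := sum_min_rpow_mul_rpow_le hα (s.map ⟨PNat.val, PNat.coe_injective⟩) m
  rw [Finset.sum_map] at hrow
  calc ∑ n ∈ s, hilbertKernel α m n * (n : ℝ) ^ (-1/2 : ℝ)
      = (m : ℝ) ^ (-1/2 - α) *
          ∑ n ∈ s, (min m n : ℝ) ^ (2 * α) * (n : ℝ) ^ (-(1 + α)) := by
        rw [Finset.mul_sum]
        exact Finset.sum_congr rfl fun n _ => hilbertKernel_mul_rpow (hpos m) (hpos n)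
    _ ≤ (m : ℝ) ^ (-1/2 - α) * (hilbertConst α * (m : ℝ) ^ α) := by
        gcongr
        exact hrow
    _ = hilbertConst α * (m : ℝ) ^ (-1/2 : ℝ) := by
        rw [mul_left_comm, ← Real.rpow_add (hpos m), sub_add_cancel]

end HilbertKernel

theorem bilinear_form_upper_bound_general (α : ℝ) (hα : 0 < α) (a b : ℕ+ → ℝ)
    (ha : Summable fun n => a n ^ 2) (hb : Summable fun n => b n ^ 2) :
    Summable (fun p : ℕ+ × ℕ+ =>
      a p.1 * b p.2 * ((p.1 : ℝ) * (p.2 : ℝ)) ^ (α - 1/2) / (max (p.1 : ℝ) (p.2 : ℝ)) ^ (2*α)) ∧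
    |∑' (m : ℕ+) (n : ℕ+),
        a m * b n * ((m : ℝ) * (n : ℝ)) ^ (α - 1/2) / (max (m : ℝ) (n : ℝ)) ^ (2*α)|
      ≤ max (2/α) (∑' n : ℕ+, (n : ℝ) ^ (-(1+α))) *
          Real.sqrt (∑' n : ℕ+, a n ^ 2) * Real.sqrt (∑' n : ℕ+, b n ^ 2) := by
  have hweight (n : ℕ+) : 0 < (n : ℝ) ^ (-1/2 : ℝ) :=
    Real.rpow_pos_of_pos (by exact_mod_cast n.pos) _
  have hrow := sum_hilbertKernel_mul_rpow_le hα
  have hcol (n : ℕ+) (s : Finset ℕ+) : ∑ m ∈ s, hilbertKernel α m n * (m : ℝ) ^ (-1/2 : ℝ) ≤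
      hilbertConst α * (n : ℝ) ^ (-1/2 : ℝ) := by
    simpa only [hilbertKernel_comm α _ n] using hrow n s
  obtain ⟨hsum, hle⟩ := summable_and_abs_tsum_le_of_schur
    (fun m n : ℕ+ => hilbertKernel_nonneg (α := α) m.val.cast_nonneg n.val.cast_nonneg)
    hweight hweight hrow hcol ha hb
  have hC : 0 ≤ hilbertConst α := zero_le_one.trans (one_le_hilbertConst hα)
  rw [Real.mul_self_sqrt hC, hsum.tsum_prod] at hle
  simp only [mul_div_assoc]
  exact ⟨hsum, hle⟩

/-- For `α > 0` and nonnegative square-summable sequences `a, b`, the double series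
`∑_{m,n} a_m b_n (mn)^{α-1/2} / max(m,n)^{2α}` converges and is bounded by
`max(2/α, ζ(1+α)) ‖a‖_{ℓ²} ‖b‖_{ℓ²}`. Here `ζ(1+α) = ∑_{n≥1} n^{-(1+α)}`. -/
theorem bilinear_form_upper_bound (α : ℝ) (hα : 0 < α) (a b : ℕ+ → ℝ)
    (ha0 : ∀ n, 0 ≤ a n) (hb0 : ∀ n, 0 ≤ b n)
    (ha : Summable fun n => a n ^ 2) (hb : Summable fun n => b n ^ 2) :
    Summable (fun p : ℕ+ × ℕ+ =>
      a p.1 * b p.2 * ((p.1 : ℝ) * (p.2 : ℝ)) ^ (α - 1/2) / (max (p.1 : ℝ) (p.2 : ℝ)) ^ (2*α)) ∧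
    ∑' (m : ℕ+) (n : ℕ+),
        a m * b n * ((m : ℝ) * (n : ℝ)) ^ (α - 1/2) / (max (m : ℝ) (n : ℝ)) ^ (2*α)
      ≤ max (2/α) (∑' n : ℕ+, (n : ℝ) ^ (-(1+α))) *
          Real.sqrt (∑' n : ℕ+, a n ^ 2) * Real.sqrt (∑' n : ℕ+, b n ^ 2) :=
  (bilinear_form_upper_bound_general α hα a b ha hb).imp_right (le_abs_self _).trans
end

section
/- Let α > 0 satisfy α·ζ(1+α) ≤ 2. Then 2/α is the best constant in the Hilbert-type inequality for B_α: for all square-summable sequences a = (a_n)_{n≥1}, b = (b_n)_{n≥1} of nonnegative reals one has ∑_{m=1}^∞ ∑_{n=1}^∞ a_m b_n (mn)^{α−1/2} / max(m,n)^{2α} ≤ (2/α) · ‖a‖_{ℓ²} ‖b‖_{ℓ²}, and for every C < 2/α there exist nonzero square-summable nonnegative sequences a, b for which the double sum exceeds C · ‖a‖_{ℓ²} ‖b‖_{ℓ²}. -/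
/-!
The upper bound is Schur's test with the weights `n ^ (-1/2)`: it suffices that
`∑_{n ≤ m} n ^ (α-1) + m ^ (2α) ∑_{n > m} n ^ (-(1+α)) ≤ (2/α) m ^ α` for every `m ≥ 1`. For `m = 1`
this is the hypothesis `α ζ(1+α) ≤ 2`. Passing from `m` to `m + 1` raises the left side by
`((m+1) ^ (2α) - m ^ (2α)) ∑_{n > m} n ^ (-(1+α))`, so the induction step is precisely the tail
estimate `∑_{n > m} n ^ (-(1+α)) ≤ (2/α) / (m ^ α + (m+1) ^ α)`.

The tail estimate telescopes. With `h = 1/(m+1)` each step is the inequality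
`αh/2 ≤ 1/(1+(1-h)^α) - 1/(1+(1+h)^α)`, whose right side is concave in `α ≥ 0` because the logistic
function is concave on `[0, ∞)`, and is rational in `h` at `α = 0, 1, 2`. The chord between `1` and
`2` is good enough for `α ≤ 5/3`, a range that `α ζ(1+α) ≤ 2` guarantees.

For sharpness, `n ^ (-1/2)` truncated at `N` has squared norm `H_N = ∑_{n ≤ N} 1/n`, while the form
takes the value `(2/α) H_N + O(1)`.
-/

open Finset Real

lemma concaveOn_sigmoid : ConcaveOn ℝ (Set.Ici 0) sigmoid := by
  refine AntitoneOn.concaveOn_of_deriv (convex_Ici 0) continuous_sigmoid.continuousOn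
    differentiable_sigmoid.differentiableOn ?_
  rw [deriv_sigmoid, interior_Ici]
  intro x hx y _ hxy
  have half_le : 2⁻¹ ≤ sigmoid x := sigmoid_zero ▸ sigmoid_le (le_of_lt hx)
  have mono : sigmoid x ≤ sigmoid y := sigmoid_le hxy
  nlinarith

lemma concaveOn_sigmoid_mul_right {c : ℝ} (hc : 0 ≤ c) :
    ConcaveOn ℝ (Set.Ici 0) fun t ↦ sigmoid (t * c) :=
  (concaveOn_sigmoid.comp_linearMap (LinearMap.mulRight ℝ c)).subset
    (fun _ ht ↦ mul_nonneg ht hc) (convex_Ici 0)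

lemma inv_one_add_rpow {x : ℝ} (hx : 0 < x) (t : ℝ) :
    (1 + x ^ t)⁻¹ = sigmoid (t * -log x) := by
  rw [sigmoid_def, rpow_def_of_pos hx]
  ring_nf

/-- The increment across `[1 - h, 1 + h]` of `-1 / (1 + x ^ t)`, seen as a function of the exponent
`t`: up to a factor it is the step of the telescoping bound for the tails of `ζ`. -/
noncomputable def logisticGap (h t : ℝ) : ℝ := (1 + (1 - h) ^ t)⁻¹ - (1 + (1 + h) ^ t)⁻¹

lemma concaveOn_logisticGap {h : ℝ} (hh : 0 ≤ h) (hh_lt : h < 1) :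
    ConcaveOn ℝ (Set.Ici 0) (logisticGap h) := by
  have log_sub : 0 ≤ -log (1 - h) :=
    neg_nonneg.2 (log_nonpos (by linarith) (by linarith))
  have log_add : 0 ≤ log (1 + h) := log_nonneg (by linarith)
  have eq_sigmoid : logisticGap h =
      fun t ↦ sigmoid (t * -log (1 - h)) + sigmoid (t * log (1 + h)) + -1 := by
    ext t
    rw [logisticGap, inv_one_add_rpow (by linarith), inv_one_add_rpow (by linarith), mul_neg t,
      mul_neg t, sigmoid_neg (t * log (1 + h))]
    ring
  rw [eq_sigmoid]
  exact ((concaveOn_sigmoid_mul_right log_sub).add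
    (concaveOn_sigmoid_mul_right log_add)).add_const _

lemma logisticGap_zero (h : ℝ) : logisticGap h 0 = 0 := by simp [logisticGap]

lemma logisticGap_one {h : ℝ} (hh_gt : -2 < h) (hh_lt : h < 2) :
    logisticGap h 1 = 2 * h / (4 - h ^ 2) := by
  rw [logisticGap, rpow_one, rpow_one, inv_sub_inv (by linarith) (by linarith)]
  congr 1 <;> ring

lemma logisticGap_two (h : ℝ) : logisticGap h 2 = 4 * h / (4 + h ^ 4) := by
  rw [logisticGap, rpow_two, rpow_two, inv_sub_inv (by positivity) (by positivity)]
  congr 1 <;> ring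

lemma mul_half_le_logisticGap_of_le_one {h t : ℝ} (hh : 0 ≤ h) (hh_lt : h < 1) (ht : 0 ≤ t)
    (ht_le : t ≤ 1) : t * (h / 2) ≤ logisticGap h t := by
  have chord := (concaveOn_logisticGap hh hh_lt).2 (Set.mem_Ici.2 le_rfl)
    (Set.mem_Ici.2 zero_le_one) (sub_nonneg.2 ht_le) ht (sub_add_cancel 1 t)
  simp only [smul_eq_mul, mul_zero, mul_one, zero_add, logisticGap_zero,
    logisticGap_one (by linarith) (show h < 2 by linarith)] at chord
  refine le_trans (mul_le_mul_of_nonneg_left ?_ ht) chord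
  rw [div_le_div_iff₀ two_pos (by nlinarith)]
  nlinarith [pow_nonneg hh 3]

lemma mul_half_le_logisticGap_of_one_le {h t : ℝ} (hh : 0 ≤ h) (hh_le : h ≤ 1 / 2) (ht : 1 ≤ t)
    (ht_le : t ≤ 5 / 3) : t * (h / 2) ≤ logisticGap h t := by
  have chord := (concaveOn_logisticGap hh (by linarith)).2 (Set.mem_Ici.2 zero_le_one)
    (Set.mem_Ici.2 zero_le_two) (show 0 ≤ 2 - t by linarith) (sub_nonneg.2 ht) (by ring)
  simp only [smul_eq_mul, logisticGap_one (by linarith) (show h < 2 by linarith),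
    logisticGap_two, show (2 - t) * 1 + (t - 1) * 2 = t by ring] at chord
  refine le_trans ?_ chord
  have sq_le : h ^ 2 ≤ 1 / 4 := by nlinarith
  have denom_pos : 0 < 4 - h ^ 2 := by linarith
  have numerator_nonneg : 0 ≤ (2 - t) * (4 + h ^ 4) - 2 * (t - 1) * (h ^ 2 * (4 - h ^ 2)) := by
    nlinarith [mul_nonneg (sq_nonneg h) denom_pos.le]
  have excess_eq :
      (2 - t) * (2 * h / (4 - h ^ 2)) + (t - 1) * (4 * h / (4 + h ^ 4)) - t * (h / 2) =
        h ^ 3 * ((2 - t) * (4 + h ^ 4) - 2 * (t - 1) * (h ^ 2 * (4 - h ^ 2))) /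
          (2 * (4 - h ^ 2) * (4 + h ^ 4)) := by
    field_simp
    ring
  rw [← sub_nonneg, excess_eq]
  positivity

lemma mul_half_le_logisticGap {h t : ℝ} (hh : 0 ≤ h) (hh_le : h ≤ 1 / 2) (ht : 0 ≤ t)
    (ht_le : t ≤ 5 / 3) : t * (h / 2) ≤ logisticGap h t := by
  rcases le_total t 1 with le_one | one_le
  · exact mul_half_le_logisticGap_of_le_one hh (by linarith) ht le_one
  · exact mul_half_le_logisticGap_of_one_le hh hh_le one_le ht_le

/-- The upper bound for the tail `∑_{n > x} n ^ (-(1 + α))` that closes the induction in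
`sum_add_mul_zetaTail_le`. -/
noncomputable def tailMajorant (α x : ℝ) : ℝ := 2 / α / (x ^ α + (x + 1) ^ α)

lemma rpow_le_tailMajorant_sub {α x : ℝ} (hα : 0 < α) (hα_le : α ≤ 5 / 3) (one_le : 1 ≤ x) :
    (x + 1) ^ (-(1 + α)) ≤ tailMajorant α x - tailMajorant α (x + 1) := by
  have : 0 < x := by linarith
  have gap := mul_half_le_logisticGap (h := 1 / (x + 1)) (by positivity)
    (one_div_le_one_div_of_le two_pos (by linarith)) hα.le hα_le
  have below : 1 - 1 / (x + 1) = x / (x + 1) := by field_simp; ring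
  have above : 1 + 1 / (x + 1) = (x + 1 + 1) / (x + 1) := by field_simp
  calc (x + 1) ^ (-(1 + α))
      = 2 / α / (x + 1) ^ α * (α * (1 / (x + 1) / 2)) := by
        rw [rpow_neg (by positivity), rpow_add (by positivity), rpow_one]
        field_simp
    _ ≤ 2 / α / (x + 1) ^ α * logisticGap (1 / (x + 1)) α := by gcongr
    _ = tailMajorant α x - tailMajorant α (x + 1) := by
        rw [logisticGap, below, above, div_rpow (by positivity) (by positivity),
          div_rpow (by positivity) (by positivity), tailMajorant, tailMajorant]
        field_simp
        ring

lemma tsum_le_of_le_sub_succ {f u : ℕ → ℝ} (f_nonneg : ∀ n, 0 ≤ f n) (u_nonneg : ∀ n, 0 ≤ u n)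
    (hfu : ∀ n, f n ≤ u n - u (n + 1)) : ∑' n, f n ≤ u 0 := by
  refine Real.tsum_le_of_sum_range_le f_nonneg fun n ↦ ?_
  calc ∑ i ∈ range n, f i ≤ ∑ i ∈ range n, (u i - u (i + 1)) := sum_le_sum fun i _ ↦ hfu i
    _ = u 0 - u n := sum_range_sub' u n
    _ ≤ u 0 := sub_le_self _ (u_nonneg n)

/-- The tail `∑_{n > m} n ^ (-s)` of the Dirichlet series of `ζ(s)`, so that `zetaTail s 0 = ζ(s)`;
meaningful for `1 < s`. -/
noncomputable def zetaTail (s : ℝ) (m : ℕ) : ℝ := ∑' k : ℕ, ((k : ℝ) + m + 1) ^ (-s)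

lemma summable_zetaTail {s : ℝ} (hs : 1 < s) (m : ℕ) :
    Summable fun k : ℕ ↦ ((k : ℝ) + m + 1) ^ (-s) := by
  refine ((summable_nat_add_iff (m + 1)).2 (summable_nat_rpow.2 (neg_lt_neg hs))).congr fun k ↦ ?_
  push_cast
  rw [add_assoc]

lemma tsum_pnat_rpow_eq_zetaTail (s : ℝ) : ∑' n : ℕ+, (n : ℝ) ^ (-s) = zetaTail s 0 := by
  simp [zetaTail, tsum_pnat_eq_tsum_succ (f := fun n ↦ (n : ℝ) ^ (-s))]

lemma zetaTail_eq_add_zetaTail_succ {s : ℝ} (hs : 1 < s) (m : ℕ) :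
    zetaTail s m = ((m : ℝ) + 1) ^ (-s) + zetaTail s (m + 1) := by
  rw [zetaTail, (summable_zetaTail hs m).tsum_eq_zero_add, zetaTail]
  congr 1
  · simp
  · refine tsum_congr fun k ↦ ?_
    push_cast
    ring_nf

lemma sum_range_rpow_le_zetaTail_zero {s : ℝ} (hs : 1 < s) (N : ℕ) :
    ∑ k ∈ range N, ((k : ℝ) + 1) ^ (-s) ≤ zetaTail s 0 := by
  simpa [zetaTail] using
    (summable_zetaTail hs 0).sum_le_tsum (range N) fun k _ ↦ by positivity

lemma zetaTail_le_zetaTail {s t : ℝ} (hs : 1 < s) (hst : s ≤ t) (m : ℕ) :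
    zetaTail t m ≤ zetaTail s m :=
  (summable_zetaTail (hs.trans_le hst) m).tsum_le_tsum
    (fun k ↦ rpow_le_rpow_of_exponent_le
      (by linarith [show (0 : ℝ) ≤ k + m by positivity]) (neg_le_neg hst))
    (summable_zetaTail hs m)

lemma one_lt_zetaTail_zero {s : ℝ} (hs : 1 < s) : 1 < zetaTail s 0 := by
  have two_terms := sum_range_rpow_le_zetaTail_zero hs 2
  simp only [sum_range_succ, sum_range_zero, Nat.cast_zero, zero_add, one_rpow] at two_terms
  have second_pos : (0 : ℝ) < ((1 : ℕ) + 1) ^ (-s) := by positivity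
  linarith

lemma six_fifths_lt_zetaTail_three : 6 / 5 < zetaTail 3 0 := by
  refine lt_of_lt_of_le ?_ (sum_range_rpow_le_zetaTail_zero (by norm_num) 25)
  have cube (k : ℕ) : ((k : ℝ) + 1) ^ (-3 : ℝ) = 1 / ((k : ℝ) + 1) ^ 3 := by
    rw [rpow_neg (by positivity), one_div]
    norm_cast
  simp only [cube]
  norm_num [sum_range_succ]

lemma le_five_thirds_of_mul_zetaTail_le_two {α : ℝ} (hζ : α * zetaTail (1 + α) 0 ≤ 2) :
    α ≤ 5 / 3 := by
  by_contra! lt_α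
  rcases le_total α 2 with α_le | le_α
  · have anti := zetaTail_le_zetaTail (show 1 < 1 + α by linarith) (show 1 + α ≤ 3 by linarith) 0
    nlinarith [six_fifths_lt_zetaTail_three]
  · nlinarith [one_lt_zetaTail_zero (show 1 < 1 + α by linarith)]

lemma zetaTail_le_tailMajorant {α : ℝ} (hα : 0 < α) (hα_le : α ≤ 5 / 3) {m : ℕ} (hm : 1 ≤ m) :
    zetaTail (1 + α) m ≤ tailMajorant α m := by
  have telescope := tsum_le_of_le_sub_succ (f := fun k : ℕ ↦ ((k : ℝ) + m + 1) ^ (-(1 + α)))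
    (u := fun k ↦ tailMajorant α (k + m)) (fun k ↦ by positivity)
    (fun k ↦ by unfold tailMajorant; positivity) fun k ↦ by
      have one_le : (1 : ℝ) ≤ k + m := mod_cast hm.trans (Nat.le_add_left m k)
      have := rpow_le_tailMajorant_sub hα hα_le one_le
      push_cast
      rwa [add_right_comm (k : ℝ) 1]
  simpa [zetaTail] using telescope

lemma sum_add_mul_zetaTail_le {α : ℝ} (hα : 0 < α) (hζ : α * zetaTail (1 + α) 0 ≤ 2) {m : ℕ}
    (hm : 1 ≤ m) :
    ∑ k ∈ range m, ((k : ℝ) + 1) ^ (α - 1) + (m : ℝ) ^ (2 * α) * zetaTail (1 + α) m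
      ≤ 2 / α * (m : ℝ) ^ α := by
  have one_lt : 1 < 1 + α := by linarith
  induction m, hm using Nat.le_induction with
  | base =>
    have first_term := zetaTail_eq_add_zetaTail_succ one_lt 0
    simp only [Nat.cast_zero, zero_add, one_rpow] at first_term
    simpa [← first_term, le_div_iff₀ hα, mul_comm] using hζ
  | succ m hm ih =>
    have m_pos : (0 : ℝ) < m := mod_cast hm
    have sq_rpow {x : ℝ} (hx : 0 ≤ x) : x ^ (2 * α) = (x ^ α) ^ 2 := by
      rw [mul_comm, rpow_mul hx, rpow_two]
    have new_term :
        (((m : ℝ) + 1) ^ α) ^ 2 * ((m : ℝ) + 1) ^ (-(1 + α)) = ((m : ℝ) + 1) ^ (α - 1) := by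
      rw [← sq_rpow (by positivity), ← rpow_add (by positivity)]
      ring_nf
    have rpow_mono : (m : ℝ) ^ α ≤ ((m : ℝ) + 1) ^ α := by gcongr; linarith
    have tail_le := zetaTail_le_tailMajorant hα (le_five_thirds_of_mul_zetaTail_le_two hζ) hm
    rw [tailMajorant, le_div_iff₀ (by positivity)] at tail_le
    have increment_le : ((((m : ℝ) + 1) ^ α) ^ 2 - ((m : ℝ) ^ α) ^ 2) * zetaTail (1 + α) m ≤
        2 / α * (((m : ℝ) + 1) ^ α - (m : ℝ) ^ α) := by
      linarith [mul_le_mul_of_nonneg_left tail_le (sub_nonneg.2 rpow_mono)]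
    rw [sq_rpow m_pos.le] at ih
    rw [sum_range_succ, Nat.cast_succ, sq_rpow (by positivity), ← new_term]
    rw [zetaTail_eq_add_zetaTail_succ one_lt m] at ih increment_le
    linarith

section SchurTest

variable {ι κ : Type*}

lemma summable_and_tsum_sqrt_mul_sqrt_le {f g : ι → ℝ} (f_nonneg : ∀ i, 0 ≤ f i)
    (g_nonneg : ∀ i, 0 ≤ g i) (hf : Summable f) (hg : Summable g) :
    (Summable fun i ↦ √(f i) * √(g i)) ∧ ∑' i, √(f i) * √(g i) ≤ √(∑' i, f i) * √(∑' i, g i) := by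
  have holder := summable_and_inner_le_Lp_mul_Lq_tsum_of_nonneg HolderConjugate.two_two
    (fun i ↦ sqrt_nonneg (f i)) (fun i ↦ sqrt_nonneg (g i))
  simp only [rpow_two, sq_sqrt (f_nonneg _), sq_sqrt (g_nonneg _), ← sqrt_eq_rpow] at holder
  exact holder hf hg

lemma summable_and_tsum_prod_le {c : ι → ℝ} {M : ι → κ → ℝ} {A : ℝ} (c_nonneg : ∀ i, 0 ≤ c i)
    (M_nonneg : ∀ i j, 0 ≤ M i j) (hc : Summable c) (hM : ∀ i, Summable (M i))
    (row_le : ∀ i, ∑' j, M i j ≤ A) :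
    (Summable fun x : ι × κ ↦ c x.1 * M x.1 x.2) ∧
      ∑' x : ι × κ, c x.1 * M x.1 x.2 ≤ A * ∑' i, c i := by
  have term_nonneg (i : ι) (j : κ) : 0 ≤ c i * M i j := mul_nonneg (c_nonneg i) (M_nonneg i j)
  have weighted_row_le (i : ι) : ∑' j, c i * M i j ≤ A * c i := by
    rw [tsum_mul_left, mul_comm]
    exact mul_le_mul_of_nonneg_right (row_le i) (c_nonneg i)
  have rows_summable : Summable fun i ↦ ∑' j, c i * M i j :=
    .of_nonneg_of_le (fun i ↦ tsum_nonneg (term_nonneg i)) weighted_row_le (hc.mul_left A)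
  have summable : Summable fun x : ι × κ ↦ c x.1 * M x.1 x.2 :=
    (summable_prod_of_nonneg fun x ↦ term_nonneg x.1 x.2).2
      ⟨fun i ↦ (hM i).mul_left (c i), rows_summable⟩
  refine ⟨summable, ?_⟩
  rw [summable.tsum_prod, ← tsum_mul_left]
  exact rows_summable.tsum_le_tsum weighted_row_le (hc.mul_left A)

theorem tsum_tsum_mul_le_of_schur_test {K : ι → κ → ℝ} {p : ι → ℝ} {q : κ → ℝ} {A B : ℝ}
    (K_nonneg : ∀ i j, 0 ≤ K i j) (p_pos : ∀ i, 0 < p i) (q_pos : ∀ j, 0 < q j)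
    (row_summable : ∀ i, Summable fun j ↦ K i j * q j) (row_le : ∀ i, ∑' j, K i j * q j ≤ A * p i)
    (col_summable : ∀ j, Summable fun i ↦ K i j * p i) (col_le : ∀ j, ∑' i, K i j * p i ≤ B * q j)
    {a : ι → ℝ} {b : κ → ℝ} (a_nonneg : ∀ i, 0 ≤ a i) (b_nonneg : ∀ j, 0 ≤ b j)
    (ha : Summable fun i ↦ a i ^ 2) (hb : Summable fun j ↦ b j ^ 2) :
    ∑' (i) (j), a i * b j * K i j ≤ √(A * ∑' i, a i ^ 2) * √(B * ∑' j, b j ^ 2) := by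
  have row_nonneg (i : ι) (j : κ) : 0 ≤ K i j * q j / p i :=
    div_nonneg (mul_nonneg (K_nonneg i j) (q_pos j).le) (p_pos i).le
  have col_nonneg (j : κ) (i : ι) : 0 ≤ K i j * p i / q j :=
    div_nonneg (mul_nonneg (K_nonneg i j) (p_pos i).le) (q_pos j).le
  obtain ⟨row_part, row_part_le⟩ := summable_and_tsum_prod_le (fun i ↦ sq_nonneg (a i)) row_nonneg
    ha (fun i ↦ (row_summable i).div_const (p i))
    (fun i ↦ by simpa only [tsum_div_const, div_le_iff₀ (p_pos i)] using row_le i)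
  obtain ⟨col_part, col_part_le⟩ := summable_and_tsum_prod_le (fun j ↦ sq_nonneg (b j)) col_nonneg
    hb (fun j ↦ (col_summable j).div_const (q j))
    (fun j ↦ by simpa only [tsum_div_const, div_le_iff₀ (q_pos j)] using col_le j)
  have term_eq (i : ι) (j : κ) : a i * b j * K i j =
      √(a i ^ 2 * (K i j * q j / p i)) * √(b j ^ 2 * (K i j * p i / q j)) := by
    have := p_pos i
    have := q_pos j
    rw [← sqrt_mul (mul_nonneg (sq_nonneg _) (row_nonneg i j)), ← sqrt_sq
      (mul_nonneg (mul_nonneg (a_nonneg i) (b_nonneg j)) (K_nonneg i j))]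
    congr 1
    field_simp
  obtain ⟨summable, cauchy_schwarz⟩ := summable_and_tsum_sqrt_mul_sqrt_le
    (fun x : ι × κ ↦ mul_nonneg (sq_nonneg (a x.1)) (row_nonneg x.1 x.2))
    (fun x : ι × κ ↦ mul_nonneg (sq_nonneg (b x.2)) (col_nonneg x.2 x.1)) row_part
    col_part.prod_symm
  simp only [← term_eq] at summable cauchy_schwarz
  rw [← (Equiv.prodComm ι κ).tsum_eq] at col_part_le
  rw [← summable.tsum_prod]
  exact cauchy_schwarz.trans
    (mul_le_mul (sqrt_le_sqrt row_part_le) (sqrt_le_sqrt col_part_le) (sqrt_nonneg _)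
      (sqrt_nonneg _))

end SchurTest

/-- The kernel `(xy) ^ (α - 1/2) / max(x, y) ^ (2α)` of the bilinear form `B_α`, extended from
positive integers to real arguments. -/
noncomputable def maxKernel (α x y : ℝ) : ℝ := (x * y) ^ (α - 1 / 2) / max x y ^ (2 * α)

section MaxKernel

variable {α x y : ℝ}

lemma maxKernel_comm (α x y : ℝ) : maxKernel α x y = maxKernel α y x := by
  rw [maxKernel, maxKernel, mul_comm, max_comm]

lemma maxKernel_nonneg (hx : 0 ≤ x) (hy : 0 ≤ y) : 0 ≤ maxKernel α x y := by
  unfold maxKernel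
  positivity

lemma maxKernel_of_le (hy : 0 < y) (hyx : y ≤ x) :
    maxKernel α x y = x ^ (-(α + 1 / 2)) * y ^ (α - 1 / 2) := by
  have hx : 0 < x := hy.trans_le hyx
  rw [maxKernel, max_eq_left hyx, mul_rpow hx.le hy.le, mul_div_right_comm, ← rpow_sub hx]
  ring_nf

lemma maxKernel_mul_rpow_of_le (hy : 0 < y) (hyx : y ≤ x) :
    maxKernel α x y * y ^ (-(1 / 2) : ℝ) = x ^ (-(α + 1 / 2)) * y ^ (α - 1) := by
  rw [maxKernel_of_le hy hyx, mul_assoc, ← rpow_add hy]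
  ring_nf

lemma maxKernel_mul_rpow_of_ge (hx : 0 < x) (hxy : x ≤ y) :
    maxKernel α x y * y ^ (-(1 / 2) : ℝ) =
      x ^ (-(α + 1 / 2)) * (x ^ (2 * α) * y ^ (-(1 + α))) := by
  have hy : 0 < y := hx.trans_le hxy
  rw [maxKernel_comm, maxKernel_of_le hx hxy, ← mul_assoc, ← rpow_add hx, mul_right_comm,
    ← rpow_add hy, mul_comm]
  ring_nf

lemma rpow_mul_rpow_mul_maxKernel_of_le (hy : 0 < y) (hyx : y ≤ x) :
    x ^ (-(1 / 2) : ℝ) * y ^ (-(1 / 2) : ℝ) * maxKernel α x y = x ^ (-(1 + α)) * y ^ (α - 1) := by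
  rw [mul_assoc, mul_comm (y ^ _), maxKernel_mul_rpow_of_le hy hyx, ← mul_assoc,
    ← rpow_add (hy.trans_le hyx)]
  ring_nf

end MaxKernel

lemma hasSum_maxKernel_mul_rpow {α : ℝ} (hα : 0 < α) (m : ℕ+) :
    HasSum (fun n : ℕ+ ↦ maxKernel α m n * (n : ℝ) ^ (-(1 / 2) : ℝ))
      ((m : ℝ) ^ (-(α + 1 / 2)) * (∑ k ∈ range m, ((k : ℝ) + 1) ^ (α - 1) +
        (m : ℝ) ^ (2 * α) * zetaTail (1 + α) m)) := by
  have m_pos : (0 : ℝ) < m := mod_cast m.pos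
  have tail : HasSum
      (fun k : ℕ ↦ maxKernel α m ((k + m : ℕ) + 1 : ℕ) * ((k + m : ℕ) + 1 : ℕ) ^ (-(1 / 2) : ℝ))
      ((m : ℝ) ^ (-(α + 1 / 2)) * ((m : ℝ) ^ (2 * α) * zetaTail (1 + α) m)) := by
    refine (((summable_zetaTail (by linarith) m).hasSum.mul_left _).mul_left _).congr_fun
      fun k ↦ ?_
    push_cast
    rw [maxKernel_mul_rpow_of_ge m_pos (by linarith [show (0 : ℝ) ≤ k by positivity])]
  rw [hasSum_pnat_iff_hasSum_succ
    (f := fun n : ℕ ↦ maxKernel α m n * (n : ℝ) ^ (-(1 / 2) : ℝ)), ← hasSum_nat_add_iff' m]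
  convert! tail using 1
  have head : ∑ k ∈ range m, maxKernel α m (k + 1 : ℕ) * ((k + 1 : ℕ) : ℝ) ^ (-(1 / 2) : ℝ) =
      (m : ℝ) ^ (-(α + 1 / 2)) * ∑ k ∈ range m, ((k : ℝ) + 1) ^ (α - 1) := by
    rw [mul_sum]
    refine sum_congr rfl fun k hk ↦ ?_
    rw [maxKernel_mul_rpow_of_le (by positivity) (mod_cast mem_range.1 hk)]
    push_cast
    rfl
  rw [head]
  ring

lemma tsum_maxKernel_mul_rpow_le {α : ℝ} (hα : 0 < α) (hζ : α * zetaTail (1 + α) 0 ≤ 2)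
    (m : ℕ+) :
    ∑' n : ℕ+, maxKernel α m n * (n : ℝ) ^ (-(1 / 2) : ℝ) ≤ 2 / α * (m : ℝ) ^ (-(1 / 2) : ℝ) := by
  have m_pos : (0 : ℝ) < m := mod_cast m.pos
  rw [(hasSum_maxKernel_mul_rpow hα m).tsum_eq]
  calc _ ≤ (m : ℝ) ^ (-(α + 1 / 2)) * (2 / α * (m : ℝ) ^ α) := by
        gcongr
        exact sum_add_mul_zetaTail_le hα hζ m.pos
    _ = 2 / α * (m : ℝ) ^ (-(1 / 2) : ℝ) := by
        rw [mul_left_comm, ← rpow_add m_pos]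
        ring_nf

theorem tsum_tsum_mul_maxKernel_le {α : ℝ} (hα : 0 < α) (hζ : α * zetaTail (1 + α) 0 ≤ 2)
    {a b : ℕ+ → ℝ} (a_nonneg : ∀ n, 0 ≤ a n) (b_nonneg : ∀ n, 0 ≤ b n)
    (ha : Summable fun n ↦ a n ^ 2) (hb : Summable fun n ↦ b n ^ 2) :
    ∑' (m : ℕ+) (n : ℕ+), a m * b n * maxKernel α m n ≤
      2 / α * (√(∑' n, a n ^ 2) * √(∑' n, b n ^ 2)) := by
  have weight_pos (n : ℕ+) : 0 < (n : ℝ) ^ (-(1 / 2) : ℝ) := rpow_pos_of_pos (mod_cast n.pos) _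
  have summable (m : ℕ+) := (hasSum_maxKernel_mul_rpow hα m).summable
  have row_le := tsum_maxKernel_mul_rpow_le hα hζ
  refine (tsum_tsum_mul_le_of_schur_test
    (fun m n : ℕ+ ↦ maxKernel_nonneg (Nat.cast_nonneg m) (Nat.cast_nonneg n))
    weight_pos weight_pos summable row_le
    (fun n ↦ (summable n).congr fun m ↦ by rw [maxKernel_comm])
    (fun n ↦ (tsum_congr fun m : ℕ+ ↦ by rw [maxKernel_comm]).trans_le (row_le n))
    a_nonneg b_nonneg ha hb).trans_eq ?_
  have const_nonneg : 0 ≤ 2 / α := by positivity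
  rw [sqrt_mul const_nonneg, sqrt_mul const_nonneg, mul_mul_mul_comm, mul_self_sqrt const_nonneg]

lemma rpow_sub_one_div_le_sum_range {α : ℝ} (hα : 0 < α) (m : ℕ) :
    ((m : ℝ) ^ α - 1) / α ≤ ∑ k ∈ range m, ((k : ℝ) + 1) ^ (α - 1) := by
  rcases le_total 1 α with one_le | le_one
  · have mono : MonotoneOn (fun x : ℝ ↦ x ^ (α - 1)) (Set.Icc 0 (0 + m)) :=
      (monotoneOn_rpow_Ici_of_exponent_nonneg (sub_nonneg.2 one_le)).mono Set.Icc_subset_Ici_self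
    have integral_le := mono.integral_le_sum
    rw [integral_rpow (.inl (by linarith))] at integral_le
    simp only [sub_add_cancel, zero_add, zero_rpow hα.ne', sub_zero, Nat.cast_succ] at integral_le
    refine le_trans ?_ integral_le
    gcongr
    linarith
  · have anti : AntitoneOn (fun x : ℝ ↦ x ^ (α - 1)) (Set.Icc 1 (1 + m)) :=
      (antitoneOn_rpow_Ioi_of_exponent_nonpos (sub_nonpos.2 le_one)).mono
        fun x hx ↦ zero_lt_one.trans_le hx.1
    have integral_le := anti.integral_le_sum
    rw [integral_rpow (.inl (by linarith))] at integral_le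
    simp only [sub_add_cancel, one_rpow, add_comm (1 : ℝ)] at integral_le
    refine le_trans ?_ integral_le
    gcongr
    linarith

lemma sum_range_sum_range_of_symm {R : Type*} [CommRing R] {F : ℕ → ℕ → R}
    (symm : ∀ i j, F i j = F j i) (N : ℕ) :
    ∑ i ∈ range N, ∑ j ∈ range N, F i j =
      ∑ i ∈ range N, (2 * ∑ j ∈ range (i + 1), F i j - F i i) := by
  induction N with
  | zero => simp
  | succ N ih =>
    simp only [sum_range_succ _ N, sum_add_distrib] at ih ⊢
    rw [ih, sum_congr rfl fun i _ ↦ symm i N]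
    ring

lemma one_div_sub_rpow_le_rpow_mul_sum_range {α : ℝ} (hα : 0 < α) (m : ℕ) :
    1 / α * (1 / ((m : ℝ) + 1) - ((m : ℝ) + 1) ^ (-(1 + α))) ≤
      ((m : ℝ) + 1) ^ (-(1 + α)) * ∑ k ∈ range (m + 1), ((k : ℝ) + 1) ^ (α - 1) := by
  have one_div_eq : 1 / ((m : ℝ) + 1) = ((m : ℝ) + 1) ^ (-(1 + α)) * ((m : ℝ) + 1) ^ α := by
    rw [← rpow_add (by positivity), one_div, ← rpow_neg_one]
    ring_nf
  calc 1 / α * (1 / ((m : ℝ) + 1) - ((m : ℝ) + 1) ^ (-(1 + α)))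
      = ((m : ℝ) + 1) ^ (-(1 + α)) * ((((m + 1 : ℕ) : ℝ) ^ α - 1) / α) := by
        rw [one_div_eq, Nat.cast_succ]
        ring
    _ ≤ _ := by
        gcongr
        exact rpow_sub_one_div_le_sum_range hα (m + 1)

lemma mul_sum_one_div_sub_le_sum_maxKernel {α : ℝ} (hα : 0 < α) (N : ℕ) :
    2 / α * ∑ k ∈ range N, 1 / ((k : ℝ) + 1) - (2 / α * zetaTail (1 + α) 0 + zetaTail 2 0) ≤
      ∑ i ∈ range N, ∑ j ∈ range N, ((i : ℝ) + 1) ^ (-(1 / 2) : ℝ) *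
        ((j : ℝ) + 1) ^ (-(1 / 2) : ℝ) * maxKernel α (i + 1) (j + 1) := by
  have lower_triangle (i : ℕ) : ∑ j ∈ range (i + 1), ((i : ℝ) + 1) ^ (-(1 / 2) : ℝ) *
      ((j : ℝ) + 1) ^ (-(1 / 2) : ℝ) * maxKernel α (i + 1) (j + 1) =
        ((i : ℝ) + 1) ^ (-(1 + α)) * ∑ j ∈ range (i + 1), ((j : ℝ) + 1) ^ (α - 1) := by
    rw [mul_sum]
    refine sum_congr rfl fun j hj ↦ rpow_mul_rpow_mul_maxKernel_of_le (by positivity) ?_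
    exact_mod_cast mem_range.1 hj
  have diagonal (i : ℕ) : ((i : ℝ) + 1) ^ (-(1 / 2) : ℝ) * ((i : ℝ) + 1) ^ (-(1 / 2) : ℝ) *
      maxKernel α (i + 1) (i + 1) = ((i : ℝ) + 1) ^ (-2 : ℝ) := by
    rw [rpow_mul_rpow_mul_maxKernel_of_le (by positivity) le_rfl, ← rpow_add (by positivity)]
    ring_nf
  rw [sum_range_sum_range_of_symm fun i j ↦ by rw [maxKernel_comm]; ring]
  simp only [lower_triangle, diagonal, sum_sub_distrib, ← mul_sum]
  have rows_ge := sum_le_sum fun i (_ : i ∈ range N) ↦ one_div_sub_rpow_le_rpow_mul_sum_range hα i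
  rw [← mul_sum, sum_sub_distrib] at rows_ge
  have zeta_le := mul_le_mul_of_nonneg_left
    (sum_range_rpow_le_zetaTail_zero (show 1 < 1 + α by linarith) N) (by positivity : 0 ≤ 2 / α)
  have diagonal_le := sum_range_rpow_le_zetaTail_zero one_lt_two N
  have two_div : 2 / α = 2 * (1 / α) := by ring
  rw [two_div] at zeta_le ⊢
  linarith

/-- The test sequence for sharpness: `n ^ (-1/2)` cut off after `N`. Only its values at `n ≥ 1`
matter. -/
noncomputable def truncInvSqrt (N n : ℕ) : ℝ := if n ≤ N then (n : ℝ) ^ (-(1 / 2) : ℝ) else 0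

lemma truncInvSqrt_nonneg (N n : ℕ) : 0 ≤ truncInvSqrt N n := by
  unfold truncInvSqrt
  positivity

lemma truncInvSqrt_of_lt {N n : ℕ} (h : N < n) : truncInvSqrt N n = 0 := if_neg h.not_ge

lemma truncInvSqrt_succ_of_mem_range {N k : ℕ} (hk : k ∈ range N) :
    truncInvSqrt N (k + 1) = ((k : ℝ) + 1) ^ (-(1 / 2) : ℝ) := by
  rw [truncInvSqrt, if_pos (Nat.succ_le_of_lt (mem_range.1 hk)), Nat.cast_succ]

lemma hasSum_pnat_sum_range {M : Type*} [AddCommMonoid M] [TopologicalSpace M] {f : ℕ → M} {N : ℕ}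
    (hf : ∀ n, N < n → f n = 0) :
    HasSum (fun n : ℕ+ ↦ f n) (∑ k ∈ range N, f (k + 1)) :=
  hasSum_pnat_iff_hasSum_succ.2 <| hasSum_sum_of_ne_finset_zero fun _ hk ↦
    hf _ (Nat.lt_succ_of_le (not_lt.1 (mem_range.not.1 hk)))

lemma hasSum_truncInvSqrt_sq (N : ℕ) :
    HasSum (fun n : ℕ+ ↦ truncInvSqrt N n ^ 2) (∑ k ∈ range N, 1 / ((k : ℝ) + 1)) := by
  have := hasSum_pnat_sum_range (f := fun n ↦ truncInvSqrt N n ^ 2) (N := N)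
    fun n hn ↦ by simp [truncInvSqrt_of_lt hn]
  convert this using 2 with k hk
  rw [truncInvSqrt_succ_of_mem_range hk, ← rpow_mul_natCast (by positivity), one_div,
    ← rpow_neg_one]
  norm_num

lemma tsum_tsum_truncInvSqrt_mul (N : ℕ) (K : ℝ → ℝ → ℝ) :
    ∑' (m : ℕ+) (n : ℕ+), truncInvSqrt N m * truncInvSqrt N n * K m n =
      ∑ i ∈ range N, ∑ j ∈ range N, ((i : ℝ) + 1) ^ (-(1 / 2) : ℝ) *
        ((j : ℝ) + 1) ^ (-(1 / 2) : ℝ) * K (i + 1) (j + 1) := by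
  have inner (m : ℕ+) := (hasSum_pnat_sum_range
    (f := fun n ↦ truncInvSqrt N m * truncInvSqrt N n * K m n) (N := N)
    fun n hn ↦ by simp [truncInvSqrt_of_lt hn]).tsum_eq
  have outer := (hasSum_pnat_sum_range (N := N) (f := fun m ↦ ∑ j ∈ range N,
    truncInvSqrt N m * truncInvSqrt N (j + 1) * K m (j + 1 : ℕ))
    fun m hm ↦ by simp [truncInvSqrt_of_lt hm]).tsum_eq
  rw [tsum_congr inner, outer]
  refine sum_congr rfl fun i hi ↦ sum_congr rfl fun j hj ↦ ?_
  rw [truncInvSqrt_succ_of_mem_range hi, truncInvSqrt_succ_of_mem_range hj, Nat.cast_succ,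
    Nat.cast_succ]

theorem exists_lt_tsum_tsum_mul_maxKernel {α C : ℝ} (hα : 0 < α) (hC : C < 2 / α) :
    ∃ a : ℕ+ → ℝ, (∀ n, 0 ≤ a n) ∧ (Summable fun n ↦ a n ^ 2) ∧ a ≠ 0 ∧
      C * (√(∑' n, a n ^ 2) * √(∑' n, a n ^ 2)) <
        ∑' (m : ℕ+) (n : ℕ+), a m * a n * maxKernel α m n := by
  obtain ⟨N, harmonic_gt, N_pos⟩ := ((tendsto_sum_range_one_div_nat_succ_atTop.eventually_gt_atTop
    ((2 / α * zetaTail (1 + α) 0 + zetaTail 2 0) / (2 / α - C))).and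
      (Filter.eventually_gt_atTop 0)).exists
  rw [div_lt_iff₀ (sub_pos.2 hC)] at harmonic_gt
  refine ⟨fun n ↦ truncInvSqrt N n, fun n ↦ truncInvSqrt_nonneg N n,
    (hasSum_truncInvSqrt_sq N).summable, fun h ↦ ?_, ?_⟩
  · have at_one := congrFun h 1
    simp [truncInvSqrt, Nat.one_le_iff_ne_zero, N_pos.ne'] at at_one
  · rw [mul_self_sqrt (tsum_nonneg fun n ↦ sq_nonneg _), (hasSum_truncInvSqrt_sq N).tsum_eq,
      tsum_tsum_truncInvSqrt_mul]
    refine lt_of_lt_of_le ?_ (mul_sum_one_div_sub_le_sum_maxKernel hα N)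
    linarith

/-- If `α > 0` and `α·ζ(1+α) ≤ 2` (i.e. `0 < α ≤ α₀ = 1.48…`), then `2/α` is the best
constant in the Hilbert-type inequality for the bilinear form `B_α`: the double sum
`∑_{m,n} a_m b_n (mn)^{α-1/2} / max(m,n)^{2α}` is at most `(2/α) ‖a‖_{ℓ²} ‖b‖_{ℓ²}` for all
nonnegative square-summable `a, b`, and for every `C < 2/α` some nonzero nonnegative
square-summable pair exceeds `C ‖a‖_{ℓ²} ‖b‖_{ℓ²}`. Here `ζ(1+α) = ∑_{n≥1} n^{-(1+α)}`. -/
theorem bilinear_form_sharp_constant (α : ℝ) (hα : 0 < α)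
    (hα0 : α * (∑' n : ℕ+, (n : ℝ) ^ (-(1+α))) ≤ 2) :
    (∀ a b : ℕ+ → ℝ, (∀ n, 0 ≤ a n) → (∀ n, 0 ≤ b n) →
      (Summable fun n => a n ^ 2) → (Summable fun n => b n ^ 2) →
      ∑' (m : ℕ+) (n : ℕ+),
          a m * b n * ((m : ℝ) * (n : ℝ)) ^ (α - 1/2) / (max (m : ℝ) (n : ℝ)) ^ (2*α)
        ≤ (2/α) * (Real.sqrt (∑' n : ℕ+, a n ^ 2) * Real.sqrt (∑' n : ℕ+, b n ^ 2))) ∧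
    (∀ C : ℝ, C < 2/α →
      ∃ a b : ℕ+ → ℝ, (∀ n, 0 ≤ a n) ∧ (∀ n, 0 ≤ b n) ∧
        (Summable fun n => a n ^ 2) ∧ (Summable fun n => b n ^ 2) ∧
        a ≠ 0 ∧ b ≠ 0 ∧
        C * (Real.sqrt (∑' n : ℕ+, a n ^ 2) * Real.sqrt (∑' n : ℕ+, b n ^ 2))
          < ∑' (m : ℕ+) (n : ℕ+),
              a m * b n * ((m : ℝ) * (n : ℝ)) ^ (α - 1/2) / (max (m : ℝ) (n : ℝ)) ^ (2*α)) := by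
  rw [tsum_pnat_rpow_eq_zetaTail] at hα0
  simp only [mul_div_assoc]
  refine ⟨fun a b ha hb ha2 hb2 ↦ tsum_tsum_mul_maxKernel_le hα hα0 ha hb ha2 hb2, fun C hC ↦ ?_⟩
  obtain ⟨a, a_nonneg, a_summable, a_ne, lt⟩ := exists_lt_tsum_tsum_mul_maxKernel hα hC
  exact ⟨a, a, a_nonneg, a_nonneg, a_summable, a_summable, a_ne, a_ne, lt⟩
end
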